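/- arXiv:1805.06218 — 2 statements merged into one kernel-verified Lean document; each statement's English description precedes it below -/
import Mathlib

section
/- Let g : ℝ → ℝ be operator monotone decreasing on (0,∞), and let A, B be positive definite complex matrices with s·A ≤ B ≤ t·A for some scalars 0 < s ≤ t with s·t ≥ 1. Then (2/(√s+√t))·g(A ♯ B) ≤ (g(A) + g(B))/2. -/
open Matrix ComplexOrder

/-- Loewner order: `A ≤ B` iff `B - A` is positive semidefinite. -/
def LoewnerLE {n : Type} [Fintype n] (A B : Matrix n n ℂ) : Prop := (B - A).PosSemidef

/-- The positive square root of a (Hermitian) matrix, via the continuous functional calculus. -/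
noncomputable def msqrt {n : Type} [Fintype n] [DecidableEq n] (A : Matrix n n ℂ) :
    Matrix n n ℂ := cfc Real.sqrt A

/-- The arithmetic mean `A ∇ B = (A + B)/2`. -/
noncomputable def amean {n : Type} [Fintype n] [DecidableEq n] (A B : Matrix n n ℂ) :
    Matrix n n ℂ := (2 : ℝ)⁻¹ • (A + B)

/-- The harmonic mean `A ! B = ((A⁻¹ + B⁻¹)/2)⁻¹`. -/
noncomputable def hmean {n : Type} [Fintype n] [DecidableEq n] (A B : Matrix n n ℂ) :
    Matrix n n ℂ := ((2 : ℝ)⁻¹ • (A⁻¹ + B⁻¹))⁻¹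

/-- The geometric mean `A ♯ B = A^(1/2) (A^(-1/2) B A^(-1/2))^(1/2) A^(1/2)`. -/
noncomputable def gmean {n : Type} [Fintype n] [DecidableEq n] (A B : Matrix n n ℂ) :
    Matrix n n ℂ := msqrt A * msqrt ((msqrt A)⁻¹ * B * (msqrt A)⁻¹) * msqrt A

/-- `f : ℝ → ℝ` is operator monotone on `[0,∞)`: it is continuous and nonnegative on `[0,∞)`
and monotone on positive-semidefinite complex matrices of every finite size, with `f` applied
via the continuous functional calculus. -/
def OpMonotone (f : ℝ → ℝ) : Prop :=
  ContinuousOn f (Set.Ici 0) ∧ (∀ x : ℝ, 0 ≤ x → 0 ≤ f x) ∧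
    ∀ (k : Type) [Fintype k] [DecidableEq k] (X Y : Matrix k k ℂ),
      X.PosSemidef → LoewnerLE X Y → LoewnerLE (cfc f X) (cfc f Y)

/-- `g : ℝ → ℝ` is operator monotone decreasing on `(0,∞)`: it is continuous and nonnegative on
`(0,∞)` and antitone on positive-definite complex matrices of every finite size, with `g` applied
via the continuous functional calculus. -/
def OpAntitone (g : ℝ → ℝ) : Prop :=
  ContinuousOn g (Set.Ioi 0) ∧ (∀ x : ℝ, 0 < x → 0 ≤ g x) ∧
    ∀ (k : Type) [Fintype k] [DecidableEq k] (X Y : Matrix k k ℂ),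
      X.PosDef → Y.PosDef → LoewnerLE X Y → LoewnerLE (cfc g Y) (cfc g X)

open scoped MatrixOrder
set_option linter.unusedSectionVars false

section aux
variable {n : Type} [Fintype n] [DecidableEq n]

lemma contOn_spec (g : ℝ → ℝ) (X : Matrix n n ℂ) : ContinuousOn g (spectrum ℝ X) :=
  (X.finite_real_spectrum).continuousOn g

lemma fromBlocks_sub_aux (a b c d a' b' c' d' : Matrix n n ℂ) :
    Matrix.fromBlocks a b c d - Matrix.fromBlocks a' b' c' d' =
      Matrix.fromBlocks (a - a') (b - b') (c - c') (d - d') := by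
  ext (i | i) (j | j) <;> rfl

/-- block rotation -/
noncomputable def rotM (c d : ℝ) (R S : Matrix n n ℂ) : Matrix (n ⊕ n) (n ⊕ n) ℂ :=
  Matrix.fromBlocks ((c*c) • R + (d*d) • S) ((c*d) • (R - S)) ((c*d) • (R - S))
    ((d*d) • R + (c*c) • S)

lemma rotM_mul (c d : ℝ) (h : c*c + d*d = 1) (R S R' S' : Matrix n n ℂ) :
    rotM c d (R * R') (S * S') = rotM c d R S * rotM c d R' S' := by
  have hd : d*d = 1 - c*c := by linarith
  unfold rotM
  rw [Matrix.fromBlocks_multiply]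
  congr 1 <;>
  · simp only [add_mul, mul_add, sub_mul, mul_sub, smul_mul_smul_comm, smul_sub]
    match_scalars <;> grind

lemma rotM_one (c d : ℝ) (h : c*c + d*d = 1) : rotM c d (1 : Matrix n n ℂ) 1 = 1 := by
  unfold rotM
  rw [← Matrix.fromBlocks_one, ← add_smul, ← add_smul, add_comm (d*d), h]
  simp

noncomputable def rotHom (c d : ℝ) (h : c*c + d*d = 1) :
    (Matrix n n ℂ × Matrix n n ℂ) →ₐ[ℝ] Matrix (n ⊕ n) (n ⊕ n) ℂ :=
  AlgHom.ofLinearMap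
    { toFun := fun p => rotM c d p.1 p.2
      map_add' := by
        intro p q
        unfold rotM
        rw [Matrix.fromBlocks_add]
        congr 1 <;> simp only [Prod.fst_add, Prod.snd_add] <;> module
      map_smul' := by
        intro r p
        unfold rotM
        rw [Matrix.fromBlocks_smul]
        congr 1 <;> simp only [Prod.smul_fst, Prod.smul_snd, RingHom.id_apply] <;> module }
    (rotM_one c d h) (fun p q => rotM_mul c d h _ _ _ _)

lemma rotM_herm (c d : ℝ) {R S : Matrix n n ℂ} (hR : R.IsHermitian) (hS : S.IsHermitian) :
    (rotM c d R S).IsHermitian := by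
  unfold rotM Matrix.IsHermitian
  rw [Matrix.fromBlocks_conjTranspose]
  simp [Matrix.conjTranspose_smul, hR.eq, hS.eq]

lemma cfc_rotM (g : ℝ → ℝ) (c d : ℝ) (h : c*c + d*d = 1) {R S : Matrix n n ℂ}
    (hR : R.IsHermitian) (hS : S.IsHermitian) :
    cfc g (rotM c d R S) = rotM c d (cfc g R) (cfc g S) := by
  classical
  have hT := rotM_herm c d hR hS
  set T := rotM c d R S with hTdef
  have fR := R.finite_real_spectrum
  have fS := S.finite_real_spectrum
  have fT := T.finite_real_spectrum
  let F : Finset ℝ := fR.toFinset ∪ fS.toFinset ∪ fT.toFinset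
  let p : Polynomial ℝ := Lagrange.interpolate F id g
  have hp : ∀ x ∈ F, p.eval x = g x := fun x hx =>
    Lagrange.eval_interpolate_at_node (v := id) g (Set.injOn_id _) hx
  have eR : cfc g R = Polynomial.aeval R p := by
    rw [← cfc_polynomial (R := ℝ) p R hR.isSelfAdjoint]
    exact cfc_congr fun x hx => (hp x (by simp [F, hx])).symm
  have eS : cfc g S = Polynomial.aeval S p := by
    rw [← cfc_polynomial (R := ℝ) p S hS.isSelfAdjoint]
    exact cfc_congr fun x hx => (hp x (by simp [F, hx])).symm
  have eT : cfc g T = Polynomial.aeval T p := by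
    rw [← cfc_polynomial (R := ℝ) p T hT.isSelfAdjoint]
    exact cfc_congr fun x hx => (hp x (by simp [F, hx])).symm
  rw [eR, eS, eT]
  have h1 := Polynomial.aeval_algHom_apply (rotHom (n := n) c d h) (R, S) p
  have h2 := Polynomial.aeval_algHom_apply (AlgHom.fst ℝ (Matrix n n ℂ) (Matrix n n ℂ)) (R, S) p
  have h3 := Polynomial.aeval_algHom_apply (AlgHom.snd ℝ (Matrix n n ℂ) (Matrix n n ℂ)) (R, S) p
  simp only [AlgHom.fst_apply, AlgHom.snd_apply] at h2 h3
  rw [h2, h3]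
  exact h1

lemma msqrt_herm (A : Matrix n n ℂ) : (msqrt A).IsHermitian :=
  (cfc_predicate Real.sqrt A : IsSelfAdjoint _)

lemma msqrt_psd (A : Matrix n n ℂ) : (msqrt A).PosSemidef :=
  Matrix.nonneg_iff_posSemidef.1 (cfc_nonneg fun x _ => Real.sqrt_nonneg x)

lemma msqrt_mul_self {A : Matrix n n ℂ} (hA : A.PosSemidef) : msqrt A * msqrt A = A := by
  unfold msqrt
  rw [← cfc_mul Real.sqrt Real.sqrt A]
  conv_rhs => rw [← cfc_id' ℝ A hA.1.isSelfAdjoint]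
  refine cfc_congr fun x hx => ?_
  exact Real.mul_self_sqrt (spectrum_nonneg_of_nonneg (Matrix.nonneg_iff_posSemidef.2 hA) hx)

lemma msqrt_isUnit {A : Matrix n n ℂ} (hA : A.PosDef) : IsUnit (msqrt A) := by
  have h := hA.isUnit
  rw [← msqrt_mul_self hA.posSemidef] at h
  exact isUnit_of_mul_isUnit_left h

lemma msqrt_posDef {A : Matrix n n ℂ} (hA : A.PosDef) : (msqrt A).PosDef :=
  (msqrt_psd A).posDef_iff_isUnit.2 (msqrt_isUnit hA)

lemma rotM_posDef (c d : ℝ) (h : c*c + d*d = 1) {R S : Matrix n n ℂ}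
    (hR : R.PosDef) (hS : S.PosDef) : (rotM c d R S).PosDef := by
  have e : rotM c d R S = (rotM c d (msqrt R) (msqrt S))ᴴ * rotM c d (msqrt R) (msqrt S) := by
    rw [(rotM_herm c d (msqrt_herm R) (msqrt_herm S)).eq, ← rotM_mul c d h,
      msqrt_mul_self hR.posSemidef, msqrt_mul_self hS.posSemidef]
  have hp : (rotM c d R S).PosSemidef := by
    rw [e]; exact Matrix.posSemidef_conjTranspose_mul_self _
  refine hp.posDef_iff_isUnit.2 ?_
  refine IsUnit.of_mul_eq_one (rotM c d R⁻¹ S⁻¹) ?_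
  rw [← rotM_mul c d h, Matrix.mul_nonsing_inv _ ((Matrix.isUnit_iff_isUnit_det _).1 hR.isUnit),
    Matrix.mul_nonsing_inv _ ((Matrix.isUnit_iff_isUnit_det _).1 hS.isUnit), rotM_one c d h]

lemma real_smul_posDef {A : Matrix n n ℂ} (hA : A.PosDef) {r : ℝ} (hr : 0 < r) :
    (r • A).PosDef := hA.smul hr

lemma real_smul_psd {A : Matrix n n ℂ} (hA : A.PosSemidef) {r : ℝ} (hr : 0 ≤ r) :
    (r • A).PosSemidef := hA.smul hr

lemma exists_bound {H : Matrix n n ℂ} (hH : H.IsHermitian) :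
    ∃ N : ℝ, 0 < N ∧ (N • (1 : Matrix n n ℂ) - H).PosSemidef := by
  obtain ⟨M, hM⟩ := H.finite_real_spectrum.bddAbove
  refine ⟨max M 1, by positivity, ?_⟩
  rw [← Algebra.algebraMap_eq_smul_one, ← Matrix.le_iff]
  rw [le_algebraMap_iff_spectrum_le hH.isSelfAdjoint]
  exact fun x hx => (hM hx).trans (le_max_left _ _)

/-- operator convexity with slack -/
lemma conv_slack {g : ℝ → ℝ} (hg : OpAntitone g) {A B P : Matrix n n ℂ} (hA : A.PosDef)
    (hB : B.PosDef) (hP : (P - (2:ℝ)⁻¹ • (A + B)).PosDef) :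
    ((2:ℝ)⁻¹ • (cfc g A + cfc g B) - cfc g P).PosSemidef := by
  set c : ℝ := Real.sqrt 2⁻¹ with hc
  have hcc : c * c = 2⁻¹ := Real.mul_self_sqrt (by norm_num)
  have h : c*c + c*c = 1 := by rw [hcc]; norm_num
  have hPd : P.PosDef := by
    have := hP.add (real_smul_posDef (hA.add hB) (r := 2⁻¹) (by norm_num))
    simpa using this
  set Δ := P - (2:ℝ)⁻¹ • (A + B)
  set C := -((2:ℝ)⁻¹ • (A - B)) with hC
  have hCh : Cᴴ = C := by simp [hC, Matrix.conjTranspose_smul, hA.1.eq, hB.1.eq]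
  obtain ⟨N, hN, hNb⟩ := exists_bound (H := (2:ℝ)⁻¹ • (A + B) + Cᴴ * Δ⁻¹ * C) (by
    refine Matrix.IsHermitian.add ?_ (Matrix.isHermitian_conjTranspose_mul_mul _ hP.1.inv)
    exact (real_smul_posDef (hA.add hB) (r := 2⁻¹) (by norm_num)).1)
  have := hP.isUnit.invertible
  have key := (Matrix.PosDef.fromBlocks₁₁ C (N • (1 : Matrix n n ℂ) - (2:ℝ)⁻¹ • (A + B)) hP).2
    (by rw [sub_sub]; exact hNb)
  have hQ : (N • (1 : Matrix n n ℂ)).PosDef := real_smul_posDef Matrix.PosDef.one hN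
  have h10 : (1:ℝ)*1 + 0*0 = 1 := by norm_num
  have := hg.2.2 (n ⊕ n) (rotM c c A B) (rotM 1 0 P (N • 1)) (rotM_posDef c c h hA hB)
    (rotM_posDef 1 0 h10 hPd hQ) (by
      unfold LoewnerLE
      rw [hCh] at key
      have e : rotM 1 0 P (N • 1) - rotM c c A B =
          Matrix.fromBlocks Δ C C (N • (1 : Matrix n n ℂ) - (2:ℝ)⁻¹ • (A + B)) := by
        unfold rotM
        rw [fromBlocks_sub_aux, hcc]
        simp [Δ, hC]
      rw [e]
      exact key)
  rw [cfc_rotM g c c h hA.1 hB.1, cfc_rotM g 1 0 h10 hPd.1 hQ.1] at this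
  have h2 := Matrix.PosSemidef.submatrix this Sum.inl
  convert h2 using 1
  ext i j
  simp [rotM, hcc, mul_add]

/-- psd 2x2 scalar block -/
lemma block_psd {a b d : ℝ} (ha : 0 < a) (hd : b * b ≤ a * d) :
    (Matrix.fromBlocks (a • (1 : Matrix n n ℂ)) (b • (1 : Matrix n n ℂ)) (b • (1 : Matrix n n ℂ))
      (d • (1 : Matrix n n ℂ))).PosSemidef := by
  have hP : (a • (1 : Matrix n n ℂ)).PosDef := real_smul_posDef Matrix.PosDef.one ha
  have := hP.isUnit.invertible
  have hi : (a • (1 : Matrix n n ℂ))⁻¹ = a⁻¹ • 1 := by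
    apply Matrix.inv_eq_right_inv
    rw [smul_mul_smul_comm, mul_inv_cancel₀ ha.ne']; simp
  have hh : (b • (1 : Matrix n n ℂ))ᴴ = b • 1 := by simp [Matrix.conjTranspose_smul]
  have := (Matrix.PosDef.fromBlocks₁₁ (b • (1 : Matrix n n ℂ)) (d • (1 : Matrix n n ℂ)) hP)
  rw [hh, hi] at this
  rw [this, smul_mul_smul_comm, smul_mul_smul_comm, mul_one, mul_one, ← sub_smul]
  refine real_smul_psd Matrix.PosSemidef.one ?_
  have : b * a⁻¹ * b = b * b / a := by field_simp
  rw [this, sub_nonneg, div_le_iff₀ ha]; linarith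

lemma scalar_slack {g : ℝ → ℝ} (hg : OpAntitone g) {x y p : ℝ} (hx : 0 < x) (hxy : x ≤ y)
    (hp : 0 < p) (hpx : p * y < x) : p * g x ≤ g y := by
  have hy : 0 < y := hx.trans_le hxy
  have hp1 : p < 1 := by
    by_contra hcon
    push Not at hcon
    nlinarith
  set c := Real.sqrt p with hc
  set d := Real.sqrt (1 - p) with hd
  have hcc : c * c = p := Real.mul_self_sqrt hp.le
  have hdd : d * d = 1 - p := Real.mul_self_sqrt (by linarith)
  have h : c*c + d*d = 1 := by rw [hcc, hdd]; ring
  have h10 : (1:ℝ)*1 + 0*0 = 1 := by norm_num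
  set m := x - p * y with hm
  have hm0 : 0 < m := by linarith
  -- choose N
  set κ := p * m with hκ
  have hκ0 : 0 < κ := mul_pos hp hm0
  obtain ⟨N, hN0, hN1, hN2⟩ : ∃ N : ℝ, 0 < N ∧ 0 < p * x + (1-p) * N - y ∧
      0 ≤ N * κ + ((p*x - y)*((1-p)*x - m) - p*(1-p)*x^2) := by
    have t1 : Filter.Tendsto (fun N : ℝ => N * κ) Filter.atTop Filter.atTop :=
      Filter.tendsto_id.atTop_mul_const hκ0
    have t2 : Filter.Tendsto (fun N : ℝ => (1-p) * N) Filter.atTop Filter.atTop :=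
      Filter.tendsto_id.const_mul_atTop (by linarith)
    obtain ⟨N, a, b, c⟩ := ((Filter.eventually_gt_atTop 0).and ((t2.eventually_gt_atTop (y - p*x)).and
      (t1.eventually_ge_atTop (-((p*x - y)*((1-p)*x - m) - p*(1-p)*x^2))))).exists
    exact ⟨N, a, by linarith, by linarith⟩
  have pd : ∀ r : ℝ, 0 < r → (r • (1 : Matrix Unit Unit ℂ)).PosDef :=
    fun r hr => real_smul_posDef Matrix.PosDef.one hr
  have key := block_psd (n := Unit) (a := p * x + (1-p) * N - y) (b := c * d * (x - N))
    (d := (1-p) * x + p * N - m) hN1 (by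
      have : c * d * (x - N) * (c * d * (x - N)) = p * (1-p) * (x-N)^2 := by
        rw [← hdd]
        linear_combination d^2 * (x-N)^2 * hcc
      rw [this]
      nlinarith)
  have := hg.2.2 (Unit ⊕ Unit) (rotM 1 0 (y • 1) (m • 1)) (rotM c d (x • 1) (N • 1))
    (rotM_posDef 1 0 h10 (pd y hy) (pd m hm0)) (rotM_posDef c d h (pd x hx) (pd N hN0)) (by
      unfold LoewnerLE
      convert key using 1
      unfold rotM
      rw [fromBlocks_sub_aux, hcc, hdd]
      congr 1
      · module
      · module
      · module
      · module)
  rw [cfc_rotM g c d h (pd x hx).1 (pd N hN0).1, cfc_rotM g 1 0 h10 (pd y hy).1 (pd m hm0).1] at this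
  simp only [← Algebra.algebraMap_eq_smul_one, cfc_algebraMap] at this
  have h2 := this.diag_nonneg (i := Sum.inl ())
  simp only [rotM, hcc, hdd] at h2
  simp [Matrix.algebraMap_matrix_apply] at h2
  have h3 : p * g x + (1 - p) * g N ≤ g y := by exact_mod_cast h2
  have h4 := hg.2.1 N hN0
  nlinarith

lemma scalar_ineq {g : ℝ → ℝ} (hg : OpAntitone g) {x K : ℝ} (hx : 0 < x) (hK : 1 ≤ K) :
    g x ≤ K * g (K * x) := by
  have hK0 : 0 < K := by linarith
  have h0 := hg.2.1 x hx
  have : K⁻¹ * g x ≤ g (K * x) := by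
    have hc : Filter.Tendsto (fun p : ℝ => p * g x) (nhdsWithin K⁻¹ (Set.Iio K⁻¹))
        (nhds (K⁻¹ * g x)) :=
      (Filter.tendsto_id.mul_const (g x)).mono_left nhdsWithin_le_nhds
    refine le_of_tendsto hc ?_
    have hpos : ∀ᶠ p in nhdsWithin K⁻¹ (Set.Iio K⁻¹), 0 < p :=
      nhdsWithin_le_nhds (lt_mem_nhds (by positivity))
    filter_upwards [hpos, self_mem_nhdsWithin] with p hp hp2
    refine scalar_slack hg hx (by nlinarith) hp ?_
    have : p * K < 1 := by
      rw [Set.mem_Iio, lt_inv_comm₀ hp hK0] at hp2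
      rwa [← lt_inv_mul_iff₀ hp, mul_one]
    nlinarith
  rwa [inv_mul_le_iff₀ hK0] at this

lemma posDef_spec_pos {G : Matrix n n ℂ} (hG : G.PosDef) {x : ℝ} (hx : x ∈ spectrum ℝ G) :
    0 < x := by
  have h0 := spectrum_nonneg_of_nonneg (Matrix.nonneg_iff_posSemidef.2 hG.posSemidef) hx
  refine lt_of_le_of_ne h0 ?_
  rintro rfl
  exact spectrum.zero_notMem ℝ hG.isUnit hx

lemma matrix_scalar {g : ℝ → ℝ} (hg : OpAntitone g) {G : Matrix n n ℂ} (hG : G.PosDef) {K : ℝ}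
    (hK : 1 ≤ K) : (K • cfc g (K • G) - cfc g G).PosSemidef := by
  have e : K • cfc g (K • G) = cfc (fun x => K * g (K * x)) G := by
    have h1 : cfc (fun x => g (K * x)) G = cfc g (K • G) :=
      cfc_comp_const_mul K g G ((G.finite_real_spectrum.image _).continuousOn _)
        hG.1.isSelfAdjoint
    rw [← h1, ← cfc_smul K _ G (contOn_spec _ _)]
    simp only [smul_eq_mul]
  rw [e, ← Matrix.le_iff]
  exact cfc_mono (fun x hx => scalar_ineq hg (posDef_spec_pos hG hx) hK)
    (contOn_spec _ _) (contOn_spec _ _)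

lemma gmean_facts {A B : Matrix n n ℂ} (hA : A.PosDef) (hB : B.PosDef)
    {s t : ℝ} (hs : 0 < s) (hst : s ≤ t) (h1 : 1 ≤ s * t)
    (hsA : LoewnerLE (s • A) B) (htA : LoewnerLE B (t • A)) :
    (gmean A B).PosDef ∧
    (((Real.sqrt s + Real.sqrt t)/2) • gmean A B - (2:ℝ)⁻¹ • (A + B)).PosSemidef := by
  set S := msqrt A with hS
  have hSd : S.PosDef := msqrt_posDef hA
  have hSh : Sᴴ = S := hSd.1.eq
  have hSS : S * S = A := msqrt_mul_self hA.posSemidef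
  have hdet := (Matrix.isUnit_iff_isUnit_det _).1 hSd.isUnit
  have i1 : S * S⁻¹ = 1 := Matrix.mul_nonsing_inv _ hdet
  have i2 : S⁻¹ * S = 1 := Matrix.nonsing_inv_mul _ hdet
  have hSi : (S⁻¹)ᴴ = S⁻¹ := hSd.1.inv.eq
  set C := S⁻¹ * B * S⁻¹ with hC
  have hSCS : S * C * S = B := by
    calc S * C * S = (S * S⁻¹) * B * (S⁻¹ * S) := by rw [hC]; simp only [Matrix.mul_assoc]
      _ = B := by rw [i1, i2]; simp
  have hSAS : S⁻¹ * A * S⁻¹ = 1 := by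
    calc S⁻¹ * A * S⁻¹ = (S⁻¹ * S) * (S * S⁻¹) := by rw [← hSS]; simp only [Matrix.mul_assoc]
      _ = 1 := by rw [i1, i2]; simp
  have hinj : ∀ {M : Matrix n n ℂ}, IsUnit M → Function.Injective M.mulVec :=
    fun h => Matrix.mulVec_injective_iff_isUnit.2 h
  have hCd : C.PosDef := by
    have := hB.conjTranspose_mul_mul_same (B := S⁻¹) (hinj hSd.inv.isUnit)
    rwa [hSi] at this
  have hTd : (msqrt C).PosDef := msqrt_posDef hCd
  have hG : gmean A B = S * msqrt C * S := rfl
  refine ⟨?_, ?_⟩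
  · have := hTd.conjTranspose_mul_mul_same (B := S) (hinj hSd.isUnit)
    rwa [hSh] at this
  have lo : algebraMap ℝ _ s ≤ C := by
    have := Matrix.PosSemidef.conjTranspose_mul_mul_same hsA S⁻¹
    rw [hSi, mul_sub, sub_mul, mul_smul_comm, smul_mul_assoc, hSAS] at this
    rw [Matrix.le_iff, Algebra.algebraMap_eq_smul_one]; exact this
  have hi : C ≤ algebraMap ℝ _ t := by
    have := Matrix.PosSemidef.conjTranspose_mul_mul_same htA S⁻¹
    rw [hSi, mul_sub, sub_mul, mul_smul_comm, smul_mul_assoc, hSAS] at this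
    rw [Matrix.le_iff, Algebra.algebraMap_eq_smul_one]; exact this
  rw [algebraMap_le_iff_le_spectrum hCd.1.isSelfAdjoint] at lo
  rw [le_algebraMap_iff_spectrum_le hCd.1.isSelfAdjoint] at hi
  set K := (Real.sqrt s + Real.sqrt t)/2 with hK
  have main : (K • msqrt C - (2:ℝ)⁻¹ • (1 + C)).PosSemidef := by
    have e1 : K • msqrt C = cfc (fun x => K * Real.sqrt x) C := by
      unfold msqrt
      rw [← cfc_smul K _ C (contOn_spec _ _)]
      simp only [smul_eq_mul]
    have e2 : (2:ℝ)⁻¹ • (1 + C) = cfc (fun x : ℝ => 2⁻¹ * (1 + x)) C := by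
      rw [cfc_const_mul (2⁻¹:ℝ) (fun x => 1 + x) C,
        cfc_const_add (1:ℝ) (fun x => x) C (ha := hCd.1.isSelfAdjoint),
        cfc_id' ℝ C hCd.1.isSelfAdjoint, map_one]
    rw [e1, e2, ← Matrix.le_iff]
    refine cfc_mono (fun x hx => ?_) (contOn_spec _ _) (contOn_spec _ _)
    have l := lo x hx
    have u := hi x hx
    have a1 := Real.sqrt_le_sqrt l
    have a2 := Real.sqrt_le_sqrt u
    have a3 := Real.mul_self_sqrt (hs.le.trans l)
    have a4 : 1 ≤ Real.sqrt s * Real.sqrt t := by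
      rw [← Real.sqrt_mul hs.le]; exact Real.one_le_sqrt.2 h1
    rw [hK]
    nlinarith [mul_nonneg (sub_nonneg.2 a1) (sub_nonneg.2 a2)]
  have := main.conjTranspose_mul_mul_same S
  rw [hSh] at this
  convert this using 1
  rw [hG]
  conv_lhs => rw [← hSCS, ← hSS]
  simp only [mul_sub, sub_mul, mul_add, add_mul, mul_smul_comm, smul_mul_assoc, smul_add, mul_one]

end aux

theorem antitone_geom_le_arith {n : Type} [Fintype n] [DecidableEq n]
    (g : ℝ → ℝ) (hg : OpAntitone g)
    (A B : Matrix n n ℂ) (hA : A.PosDef) (hB : B.PosDef)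
    (s t : ℝ) (hs : 0 < s) (hst : s ≤ t) (h1 : 1 ≤ s * t)
    (hsA : LoewnerLE (s • A) B) (htA : LoewnerLE B (t • A)) :
    LoewnerLE ((2 / (Real.sqrt s + Real.sqrt t)) • cfc g (gmean A B))
      ((2 : ℝ)⁻¹ • (cfc g A + cfc g B)) := by
  obtain ⟨hG, hle⟩ := gmean_facts hA hB hs hst h1 hsA htA
  set G := gmean A B
  set K := (Real.sqrt s + Real.sqrt t)/2 with hK
  have hK1 : 1 ≤ K := by
    have a4 : 1 ≤ Real.sqrt s * Real.sqrt t := by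
      rw [← Real.sqrt_mul hs.le]; exact Real.one_le_sqrt.2 h1
    have := Real.sqrt_nonneg s
    have := Real.sqrt_nonneg t
    rw [hK]
    nlinarith [sq_nonneg (Real.sqrt s - Real.sqrt t)]
  have hK0 : 0 < K := by linarith
  set M := (2 : ℝ)⁻¹ • (cfc g A + cfc g B)
  have step : ∀ L : ℝ, K < L → (L • M - cfc g G).PosSemidef := by
    intro L hL
    have hL0 : 0 < L := hK0.trans hL
    have c1 : (M - cfc g (L • G)).PosSemidef := by
      refine conv_slack hg hA hB ?_
      have := (real_smul_posDef hG (r := L - K) (by linarith)).add_posSemidef hle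
      convert this using 1
      module
    have c2 := matrix_scalar hg hG (K := L) (by linarith)
    have := (real_smul_psd c1 hL0.le).add c2
    convert this using 1
    module
  have hMh : M.IsHermitian := by
    have a : (cfc g A).IsHermitian := (cfc_predicate g A : IsSelfAdjoint _)
    have b : (cfc g B).IsHermitian := (cfc_predicate g B : IsSelfAdjoint _)
    simp [Matrix.IsHermitian, M, Matrix.conjTranspose_smul, a.eq, b.eq]
  have hgh : (cfc g G).IsHermitian := (cfc_predicate g G : IsSelfAdjoint _)
  have lim : (K • M - cfc g G).PosSemidef := by
    refine Matrix.PosSemidef.of_dotProduct_mulVec_nonneg ?_ fun x => ?_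
    · simp [Matrix.IsHermitian, Matrix.conjTranspose_smul, hMh.eq, hgh.eq]
    · have hc : Continuous fun L : ℝ => star x ⬝ᵥ ((L • M - cfc g G) *ᵥ x) := by
        simp only [Matrix.sub_mulVec, Matrix.smul_mulVec, dotProduct_sub, dotProduct_smul]
        fun_prop
      have ht := (hc.tendsto K).mono_left (nhdsWithin_le_nhds (s := Set.Ioi K))
      refine ge_of_tendsto ht ?_
      filter_upwards [self_mem_nhdsWithin] with L hL
      exact (step L hL).dotProduct_mulVec_nonneg x
  unfold LoewnerLE
  have e : 2 / (Real.sqrt s + Real.sqrt t) = K⁻¹ := by rw [hK, inv_div]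
  rw [e]
  have := real_smul_psd lim (r := K⁻¹) (by positivity)
  rwa [smul_sub, smul_smul, inv_mul_cancel₀ hK0.ne', one_smul] at this
end

section
/- Let g : ℝ → ℝ be operator monotone decreasing on (0,∞), and let A, B be positive definite complex matrices with s·A ≤ B ≤ t·A for some scalars 0 < s ≤ t with s·t ≥ 1. Then (2/(√s+√t))·g(A ! B) ≤ g(A ♯ B). -/
open Matrix ComplexOrder

open scoped MatrixOrder

lemma contSpec {n : Type} [Fintype n] [DecidableEq n] (X : Matrix n n ℂ) (f : ℝ → ℝ) :
    ContinuousOn f (spectrum ℝ X) := (Matrix.finite_real_spectrum).continuousOn f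

lemma cfc_two {n : Type} [Fintype n] [DecidableEq n] (W : Matrix n n ℂ) (hW : W.IsHermitian)
    (hW2 : W * W = W) (g : ℝ → ℝ) (b e : ℝ) :
    cfc g (b • W + e • (1 - W)) = g b • W + g e • (1 - W) := by
  set X := b • W + e • (1 - W) with hX
  have hXh : IsSelfAdjoint X := by
    have h1 : IsSelfAdjoint W := hW
    exact (IsSelfAdjoint.smul (IsSelfAdjoint.all b) h1).add
      (IsSelfAdjoint.smul (IsSelfAdjoint.all e) ((IsSelfAdjoint.one _).sub h1))
  have hz : (X - algebraMap ℝ _ b) * (X - algebraMap ℝ _ e) = 0 := by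
    have e1 : X - algebraMap ℝ _ b = (e - b) • (1 - W) := by
      rw [hX, Algebra.algebraMap_eq_smul_one]; module
    have e2 : X - algebraMap ℝ _ e = (b - e) • W := by
      rw [hX, Algebra.algebraMap_eq_smul_one]; module
    rw [e1, e2, smul_mul_smul_comm, sub_mul (1 : Matrix n n ℂ), one_mul, hW2, sub_self, smul_zero]
  have hsp : ∀ x ∈ spectrum ℝ X, x = b ∨ x = e := by
    have hc : cfc (fun x : ℝ => (x - b) * (x - e)) X = 0 := by
      rw [cfc_mul (fun x : ℝ => x - b) (fun x : ℝ => x - e) X,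
        cfc_sub (fun x : ℝ => x) (fun _ => b) X, cfc_sub (fun x : ℝ => x) (fun _ => e) X,
        cfc_id' ℝ X, cfc_const b X, cfc_const e X, hz]
    intro x hx
    have h0 := cfc_map_spectrum (fun x : ℝ => (x - b) * (x - e)) X
    have hm : (x - b) * (x - e) ∈ spectrum ℝ (0 : Matrix n n ℂ) := by
      rw [← hc, h0]; exact ⟨x, hx, rfl⟩
    have : (x - b) * (x - e) = 0 := by
      by_contra hne
      rw [spectrum.mem_iff, sub_zero] at hm
      exact hm ((IsUnit.mk0 _ hne).map (algebraMap ℝ (Matrix n n ℂ)))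
    rcases mul_eq_zero.1 this with h | h
    · left; linarith
    · right; linarith
  set k : ℝ := (g b - g e) / (b - e) with hk
  have hkb : k * (b - e) = g b - g e := by
    by_cases h : b = e
    · simp [h]
    · rw [hk, div_mul_cancel₀ _ (sub_ne_zero.2 h)]
  have h1 : cfc g X = cfc (fun x : ℝ => k * x + (g e - k * e)) X := by
    apply cfc_congr
    intro x hx
    rcases hsp x hx with rfl | rfl
    · simp only; linarith
    · simp
  rw [h1, cfc_add (a := X) (fun x : ℝ => k * x) (fun _ => g e - k * e), cfc_const_mul k (fun x : ℝ => x) X,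
    cfc_id' ℝ X, cfc_const _ X, Algebra.algebraMap_eq_smul_one, hX]
  have : g b = k * (b - e) + g e := by linarith
  rw [this]
  module

lemma psd_of_idem {n : Type} [Fintype n] [DecidableEq n] (W : Matrix n n ℂ) (hW : W.IsHermitian)
    (hW2 : W * W = W) : W.PosSemidef := by
  have := Matrix.posSemidef_conjTranspose_mul_self W
  rwa [hW.eq, hW2] at this

lemma pd_two {n : Type} [Fintype n] [DecidableEq n] (W : Matrix n n ℂ) (hW : W.IsHermitian)
    (hW2 : W * W = W) (b e : ℝ) (hb : 0 < b) (he : 0 < e) :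
    (b • W + e • (1 - W)).PosDef := by
  have h1 := psd_of_idem W hW hW2
  have h2 := psd_of_idem (1 - W) (Matrix.isHermitian_one.sub hW) (by
    rw [sub_mul, one_mul, mul_sub, hW2, mul_one]; abel)
  have hm : 0 < min b e := lt_min hb he
  have : b • W + e • (1 - W) = (min b e) • (1 : Matrix n n ℂ) +
      ((b - min b e) • W + (e - min b e) • (1 - W)) := by module
  rw [this]
  exact (Matrix.PosDef.one.smul hm).add_posSemidef
    ((h1.smul (sub_nonneg.2 (min_le_left _ _))).add (h2.smul (sub_nonneg.2 (min_le_right _ _))))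

lemma scalar_aux (g : ℝ → ℝ) (hg : OpAntitone g) (a b p : ℝ) (ha : 0 < a) (hab : a < b)
    (hp : 0 < p) (hpa : p * b < a) : p * g a ≤ g b := by
  obtain ⟨-, hg0, hg⟩ := hg
  have hb : 0 < b := ha.trans hab
  have hp1 : p < 1 := by by_contra h; nlinarith
  obtain ⟨c, hc⟩ : ∃ c : ℝ, c ^ 2 = p := ⟨√p, Real.sq_sqrt hp.le⟩
  obtain ⟨d, hd⟩ : ∃ d : ℝ, d ^ 2 = 1 - p := ⟨√(1 - p), Real.sq_sqrt (by linarith)⟩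
  have hcd : c ^ 2 + d ^ 2 = 1 := by linarith
  set e : ℝ := (a - p * b) / 2 with he
  have he0 : 0 < e := by rw [he]; linarith
  set α : ℝ := a - b * c ^ 2 - e * d ^ 2 with hα
  have hα0 : 0 < α := by rw [hα, hc, hd]; nlinarith
  set β : ℝ := -(b - e) * (c * d) with hβ
  set M : ℝ := b * d ^ 2 + e * c ^ 2 + β ^ 2 / α with hM
  have hM0 : 0 < M := by
    have : 0 < e * c ^ 2 := by rw [hc]; positivity
    positivity
  let W : Matrix (Fin 2) (Fin 2) ℂ := !![(c : ℂ) ^ 2, c * d; c * d, (d : ℂ) ^ 2]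
  let E : Matrix (Fin 2) (Fin 2) ℂ := !![1, 0; 0, 0]
  have hcdC : (c : ℂ) ^ 2 + (d : ℂ) ^ 2 = 1 := by exact_mod_cast hcd
  have hW : W.IsHermitian := by
    ext i j; fin_cases i <;> fin_cases j <;> simp [W]
  have hE : E.IsHermitian := by
    ext i j; fin_cases i <;> fin_cases j <;> simp [E]
  have hW2 : W * W = W := by
    ext i j; fin_cases i <;> fin_cases j <;> simp [W, Matrix.mul_apply, Fin.sum_univ_two]
    · linear_combination (c : ℂ) ^ 2 * hcdC
    · linear_combination (c : ℂ) * d * hcdC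
    · linear_combination (c : ℂ) * d * hcdC
    · linear_combination (d : ℂ) ^ 2 * hcdC
  have hE2 : E * E = E := by
    ext i j; fin_cases i <;> fin_cases j <;> simp [E, Matrix.mul_apply, Fin.sum_univ_two]
  have hαC : (α : ℂ) ≠ 0 := by exact_mod_cast hα0.ne'
  have hle : LoewnerLE (b • W + e • (1 - W)) (a • E + M • (1 - E)) := by
    have h := (Matrix.posSemidef_vecMulVec_self_star (![1, ((β / α : ℝ) : ℂ)])).smul hα0.le
    have hv : α • Matrix.vecMulVec ![1, ((β / α : ℝ) : ℂ)] (star ![1, ((β / α : ℝ) : ℂ)]) =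
        !![(α : ℂ), β; β, (β : ℂ) ^ 2 / α] := by
      ext i j
      rw [Matrix.smul_apply, Matrix.vecMulVec_apply]
      fin_cases i <;> fin_cases j <;> simp <;> field_simp
    rw [hv] at h
    unfold LoewnerLE
    convert h using 1
    ext i j
    fin_cases i <;> fin_cases j <;> simp [W, E]
    · rw [hα]; push_cast; linear_combination (e : ℂ) * hcdC
    · rw [hβ]; push_cast; ring
    · rw [hβ]; push_cast; ring
    · rw [hM]; push_cast; linear_combination (e : ℂ) * hcdC
  have key := hg (Fin 2) _ _ (pd_two W hW hW2 b e hb he0) (pd_two E hE hE2 a M ha hM0) hle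
  rw [cfc_two W hW hW2, cfc_two E hE hE2] at key
  have h := key.dotProduct_mulVec_nonneg ![(c : ℂ), (d : ℂ)]
  have heq : star ![(c : ℂ), (d : ℂ)] ⬝ᵥ (g b • W + g e • (1 - W) - (g a • E + g M • (1 - E))) *ᵥ
      ![(c : ℂ), (d : ℂ)] = ((g b - c ^ 2 * g a - d ^ 2 * g M : ℝ) : ℂ) := by
    simp [W, E, Matrix.mulVec, dotProduct, Fin.sum_univ_two]
    linear_combination ((g b - g e : ℂ) * ((c : ℂ) ^ 2 + (d : ℂ) ^ 2 + 1) + g e) * hcdC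
  rw [heq] at h
  have h' : 0 ≤ g b - c ^ 2 * g a - d ^ 2 * g M := by exact_mod_cast h
  have := hg0 M hM0
  rw [hc] at h'
  nlinarith [mul_nonneg (sq_nonneg d) this]

lemma scalar_main (g : ℝ → ℝ) (hg : OpAntitone g) (a l : ℝ) (ha : 0 < a) (hl : 1 ≤ l) :
    l⁻¹ * g a ≤ g (l * a) := by
  rcases hl.eq_or_lt with rfl | hl
  · simp
  have hl0 : 0 < l := by linarith
  have hli : 0 < l⁻¹ := inv_pos.2 hl0
  have hga := hg.2.1 a ha
  have h : ∀ p, 0 < p → p < l⁻¹ → p * g a ≤ g (l * a) := fun p hp hpl => by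
    refine scalar_aux g hg a (l * a) p ha (by nlinarith) hp ?_
    have : p * l < 1 := by rwa [lt_inv_comm₀ hp hl0, ← one_div, lt_div_iff₀ hp, mul_comm] at hpl
    nlinarith
  by_contra! hc
  have hpos : 0 < g a := by
    rcases hga.eq_or_lt with h0 | h0
    · have := hg.2.1 (l * a) (by positivity)
      rw [← h0] at hc; simp at hc; linarith
    · exact h0
  have h2 : g (l * a) / g a < l⁻¹ := by rwa [div_lt_iff₀ hpos]
  obtain ⟨p, hp1, hp2⟩ := exists_between h2
  have hnn : 0 ≤ g (l * a) / g a := div_nonneg (hg.2.1 _ (by positivity)) hga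
  have := h p (by linarith) hp2
  rw [div_lt_iff₀ hpos] at hp1
  linarith

lemma pd_spec {n : Type} [Fintype n] [DecidableEq n] {X : Matrix n n ℂ} (hX : X.PosDef) :
    ∀ x ∈ spectrum ℝ X, 0 < x := by
  intro x hx
  exact (Matrix.isStrictlyPositive_iff_posDef.2 hX).spectrum_pos hx

lemma pd_cfc {n : Type} [Fintype n] [DecidableEq n] {X : Matrix n n ℂ} (hX : X.PosDef)
    (f : ℝ → ℝ) (hf : ∀ x, 0 < x → 0 < f x) : (cfc f X).PosDef := by
  have hp := pd_spec hX
  have h0 : (cfc f X).PosSemidef := by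
    rw [← Matrix.nonneg_iff_posSemidef]
    exact cfc_nonneg fun x hx => (hf x (hp x hx)).le
  rw [h0.posDef_iff_isUnit]
  have hs : IsSelfAdjoint X := hX.1
  rw [isUnit_cfc_iff f X (contSpec X f)]
  exact fun x hx => (hf x (hp x hx)).ne'

lemma scalar_mean (s t x : ℝ) (hs : 0 < s) (h1 : 1 ≤ s * t) (hst : s ≤ t) (hx1 : s ≤ x)
    (hx2 : x ≤ t) : √x ≤ ((√s + √t) / 2) * (2 * x / (1 + x)) := by
  have hx : 0 < x := by linarith
  obtain ⟨u, hu, hu0⟩ : ∃ u, u ^ 2 = s ∧ 0 < u := ⟨√s, Real.sq_sqrt hs.le, Real.sqrt_pos.2 hs⟩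
  obtain ⟨v, hv, hv0⟩ : ∃ v, v ^ 2 = t ∧ 0 < v :=
    ⟨√t, Real.sq_sqrt (by linarith), Real.sqrt_pos.2 (by linarith)⟩
  obtain ⟨y, hy, hy0⟩ : ∃ v, v ^ 2 = x ∧ 0 < v := ⟨√x, Real.sq_sqrt hx.le, Real.sqrt_pos.2 hx⟩
  subst hu hv hy
  rw [Real.sqrt_sq hu0.le, Real.sqrt_sq hv0.le, Real.sqrt_sq hy0.le]
  have a1 : u ≤ y := by nlinarith
  have a2 : y ≤ v := by nlinarith
  have a3 : 1 ≤ u * v := by nlinarith [mul_pos hu0 hv0]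
  have : (u + v) / 2 * (2 * y ^ 2 / (1 + y ^ 2)) = y * ((u + v) * y / (1 + y ^ 2)) := by
    field_simp
  rw [this]
  apply le_mul_of_one_le_right hy0.le
  rw [le_div_iff₀ (by positivity)]
  nlinarith [mul_nonneg (sub_nonneg.2 a1) (sub_nonneg.2 a2)]

lemma hinv {n : Type} [Fintype n] [DecidableEq n] {X : Matrix n n ℂ} (hX : X.PosDef) :
    ((2 : ℝ)⁻¹ • (1 + X⁻¹))⁻¹ = cfc (fun x : ℝ => 2 * x / (1 + x)) X := by
  have hs : IsSelfAdjoint X := hX.1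
  have hp := pd_spec hX
  have hi : X⁻¹ = cfc (fun x : ℝ => x⁻¹) X := by
    apply Matrix.inv_eq_right_inv
    nth_rw 1 [← cfc_id' ℝ X]
    rw [← cfc_mul _ _ X (contSpec _ _) (contSpec _ _), ← cfc_one ℝ X]
    exact cfc_congr fun x hx => mul_inv_cancel₀ (hp x hx).ne'
  have h2 : (2 : ℝ)⁻¹ • (1 + X⁻¹) = cfc (fun x : ℝ => 2⁻¹ * (1 + x⁻¹)) X := by
    rw [cfc_const_mul _ _ X (contSpec _ _), cfc_add _ _ _ (contSpec _ _) (contSpec _ _), ← hi,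
      cfc_const _ X, map_one]
  apply Matrix.inv_eq_right_inv
  rw [h2, ← cfc_mul _ _ X (contSpec _ _) (contSpec _ _), ← cfc_one ℝ X]
  apply cfc_congr
  intro x hx
  have := hp x hx
  simp only [Pi.one_apply]
  field_simp
  ring

theorem antitone_harm_le_geom {n : Type} [Fintype n] [DecidableEq n]
    (g : ℝ → ℝ) (hg : OpAntitone g)
    (A B : Matrix n n ℂ) (hA : A.PosDef) (hB : B.PosDef)
    (s t : ℝ) (hs : 0 < s) (hst : s ≤ t) (h1 : 1 ≤ s * t)
    (hsA : LoewnerLE (s • A) B) (htA : LoewnerLE B (t • A)) :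
    LoewnerLE ((2 / (Real.sqrt s + Real.sqrt t)) • cfc g (hmean A B))
      (cfc g (gmean A B)) := by
  have ht : 0 < t := by linarith
  set R := msqrt A with hR
  have hRpd : R.PosDef := pd_cfc hA _ fun x hx => Real.sqrt_pos.2 hx
  have hRR : R * R = A := by
    have hs : IsSelfAdjoint A := hA.1
    rw [hR, msqrt, ← cfc_mul _ _ A (contSpec _ _) (contSpec _ _)]
    nth_rw 2 [← cfc_id' ℝ A]
    exact cfc_congr fun x hx => Real.mul_self_sqrt (pd_spec hA x hx).le
  have hRdet : IsUnit R.det := (Matrix.isUnit_iff_isUnit_det R).1 hRpd.isUnit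
  have hRi : R⁻¹ * R = 1 := Matrix.nonsing_inv_mul R hRdet
  have hRi' : R * R⁻¹ = 1 := Matrix.mul_nonsing_inv R hRdet
  have hIH : (R⁻¹)ᴴ = R⁻¹ := hRpd.inv.1
  have hIu : IsUnit R⁻¹ := hRpd.inv.isUnit
  set X := R⁻¹ * B * R⁻¹ with hX
  have hXpd : X.PosDef := by
    have := (Matrix.IsUnit.posDef_star_left_conjugate_iff hIu).2 hB
    rwa [Matrix.star_eq_conjTranspose, hIH] at this
  have hXs : IsSelfAdjoint X := hXpd.1
  have hA1 : R⁻¹ * A * R⁻¹ = 1 := by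
    rw [← hRR, ← mul_assoc, hRi, one_mul, hRi']
  have hlo : ∀ x ∈ spectrum ℝ X, s ≤ x := by
    rw [← algebraMap_le_iff_le_spectrum, Matrix.le_iff]
    have := hsA.conjTranspose_mul_mul_same R⁻¹
    rw [hIH, mul_sub, sub_mul, mul_smul_comm, smul_mul_assoc, hA1] at this
    rwa [Algebra.algebraMap_eq_smul_one]
  have hhi : ∀ x ∈ spectrum ℝ X, x ≤ t := by
    rw [← le_algebraMap_iff_spectrum_le, Matrix.le_iff]
    have := htA.conjTranspose_mul_mul_same R⁻¹
    rw [hIH, mul_sub, sub_mul, mul_smul_comm, smul_mul_assoc, hA1] at this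
    rwa [Algebra.algebraMap_eq_smul_one]
  set l : ℝ := (√s + √t) / 2 with hl
  have hl1 : 1 ≤ l := by
    have h3 : 1 ≤ √s * √t := by rw [← Real.sqrt_mul hs.le]; exact Real.one_le_sqrt.2 h1
    have := Real.sqrt_nonneg s
    have := Real.sqrt_nonneg t
    rw [hl]
    nlinarith [sq_nonneg (√s - √t)]
  have hl0 : 0 < l := by linarith
  have hc : 2 / (√s + √t) = l⁻¹ := by rw [hl, inv_div]
  have hG : gmean A B = R * cfc Real.sqrt X * R := rfl
  have hH : hmean A B = R * cfc (fun x : ℝ => 2 * x / (1 + x)) X * R := by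
    have hBe : B = R * X * R := by
      rw [hX]
      calc B = (R * R⁻¹) * B * (R⁻¹ * R) := by rw [hRi, hRi', one_mul, mul_one]
        _ = _ := by simp only [mul_assoc]
    have e1 : A⁻¹ = R⁻¹ * R⁻¹ := by rw [← hRR, Matrix.mul_inv_rev]
    have e2 : B⁻¹ = R⁻¹ * X⁻¹ * R⁻¹ := by
      rw [hBe, Matrix.mul_inv_rev, Matrix.mul_inv_rev, mul_assoc]
    have e3 : (2 : ℝ)⁻¹ • (A⁻¹ + B⁻¹) = R⁻¹ * ((2 : ℝ)⁻¹ • (1 + X⁻¹)) * R⁻¹ := by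
      rw [e1, e2, mul_smul_comm, smul_mul_assoc, mul_add, add_mul, mul_one]
    rw [hmean, e3, Matrix.mul_inv_rev, Matrix.mul_inv_rev, hinv hXpd,
      Matrix.nonsing_inv_nonsing_inv R hRdet, mul_assoc]
  have hRH : Rᴴ = R := hRpd.1
  have hGpd : (gmean A B).PosDef := by
    have := (Matrix.IsUnit.posDef_star_left_conjugate_iff hRpd.isUnit).2
      (pd_cfc hXpd Real.sqrt fun x hx => Real.sqrt_pos.2 hx)
    rwa [Matrix.star_eq_conjTranspose, hRH] at this
  have hHpd : (hmean A B).PosDef := by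
    have := (Matrix.IsUnit.posDef_star_left_conjugate_iff hRpd.isUnit).2
      (pd_cfc hXpd (fun x : ℝ => 2 * x / (1 + x)) fun x hx => by positivity)
    rwa [Matrix.star_eq_conjTranspose, hRH, ← hH] at this
  have hGH : LoewnerLE (gmean A B) (l • hmean A B) := by
    have h : cfc Real.sqrt X ≤ cfc (fun x : ℝ => l * (2 * x / (1 + x))) X :=
      cfc_mono (fun x hx => scalar_mean s t x hs h1 hst (hlo x hx) (hhi x hx))
        (contSpec _ _) (contSpec _ _)
    rw [cfc_const_mul _ _ X (contSpec _ _), Matrix.le_iff] at h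
    have := h.conjTranspose_mul_mul_same R
    rw [hRH, mul_sub, sub_mul, mul_smul_comm, smul_mul_assoc, ← hH, ← hG] at this
    exact this
  have k1 : cfc g (l • hmean A B) ≤ cfc g (gmean A B) :=
    hg.2.2 n _ _ hGpd (hHpd.smul hl0) hGH
  have hHs : IsSelfAdjoint (hmean A B) := hHpd.1
  have k2 : l⁻¹ • cfc g (hmean A B) ≤ cfc g (l • hmean A B) := by
    rw [← cfc_comp_const_mul l g (hmean A B)
      ((Matrix.finite_real_spectrum.image _).continuousOn _),
      ← cfc_const_mul _ _ _ (contSpec _ _)]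
    exact cfc_mono (fun x hx => scalar_main g hg x l (pd_spec hHpd x hx) hl1)
      (contSpec _ _) (contSpec _ _)
  rw [hc]
  exact k2.trans k1
end
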